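/- arXiv:2505.17523 — 2 statements merged into one kernel-verified Lean document; each statement's English description precedes it below -/
import Mathlib

section
/- For every T ⊆ 𝔹, the kernel of the linear map i_T : ℚ^𝔹 → ℚ^{𝔹−T} equals the ℚ-linear span of {b_β : β ∈ T}; in particular the family {b_β : β ∈ T} is linearly independent, and ker i_T coincides with the ℚ^{≥0}-cone generated by {b_β, −b_β : β ∈ T}. -/
/- Setting: `B` is the finite nonempty set 𝔹 equipped with a permutation `σ` (Frobenius),
and `p` is a prime.  Weights live in `ℚ^𝔹 = (B → ℚ)`.  The orbits `𝔹_𝔭` of `σ` are the sets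
`orbit σ β`, and for `T ⊆ 𝔹` we have `T_𝔭 = T ∩ orbit σ β`. -/

open scoped Classical

noncomputable section

namespace GO

variable {B : Type*} [Fintype B] [DecidableEq B]

/-- The standard basis vector `e_β` of `ℚ^𝔹`. -/
def e (β : B) : B → ℚ := fun τ => if τ = β then 1 else 0

/-- `β'` lies in the `σ`-orbit of `β`. -/
def sameOrbit (σ : Equiv.Perm B) (β β' : B) : Prop := ∃ n : ℕ, (σ ^ n) β = β'

/-- The `σ`-orbit `𝔹_𝔭` of `β`. -/
def orbit (σ : Equiv.Perm B) (β : B) : Set B := {τ | sameOrbit σ β τ}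

/-- `|𝔹_𝔭|`, the cardinality of the orbit of `β`. -/
def orbitCard (σ : Equiv.Perm B) (β : B) : ℕ := (orbit σ β).ncard

/-- For `β`, `β'` in the same orbit: the unique `n` with `0 < n ≤ |𝔹_𝔭|` and `σ^n β' = β`,
realized as the least positive `n` with `σ^n β' = β`. -/
def steps (σ : Equiv.Perm B) (β' β : B) : ℕ := sInf {n : ℕ | 0 < n ∧ (σ ^ n) β' = β}

/-- For `β`, `β'` in the same orbit: the unique `n` with `0 ≤ n < |𝔹_𝔭|` and `σ^n β = β'`. -/
def steps0 (σ : Equiv.Perm B) (β β' : B) : ℕ := sInf {n : ℕ | (σ ^ n) β = β'}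

/-- `h_β^{β'} = -e_β + p^n e_{β'}` where `β = σ^n β'` with `0 < n ≤ |𝔹_𝔭|`. -/
def hvec (σ : Equiv.Perm B) (p : ℕ) (β β' : B) : B → ℚ :=
  -(e β) + ((p : ℚ) ^ steps σ β' β) • e β'

/-- `b_β^{β'} = e_β + p^n e_{β'}` where `β = σ^n β'` with `0 < n ≤ |𝔹_𝔭|`. -/
def bvec (σ : Equiv.Perm B) (p : ℕ) (β β' : B) : B → ℚ :=
  (e β) + ((p : ℚ) ^ steps σ β' β) • e β'

/-- `h_β = -e_β + p e_{σ⁻¹ β}`. -/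
def hsimple (σ : Equiv.Perm B) (p : ℕ) (β : B) : B → ℚ := -(e β) + (p : ℚ) • e (σ⁻¹ β)

/-- `b_β = e_β + p e_{σ⁻¹ β}`. -/
def bsimple (σ : Equiv.Perm B) (p : ℕ) (β : B) : B → ℚ := (e β) + (p : ℚ) • e (σ⁻¹ β)

/-- The `ℚ^{≥0}`-cone generated by a set `S` of vectors: all finite nonnegative rational
linear combinations of elements of `S`. -/
def cone {V : Type*} [AddCommMonoid V] [Module ℚ V] (S : Set V) : Set V :=
  {x | ∃ (n : ℕ) (c : Fin n → ℚ) (v : Fin n → V),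
    (∀ i, 0 ≤ c i) ∧ (∀ i, v i ∈ S) ∧ x = ∑ i, c i • v i}

/-- A chain in `T` (automatically contained in a single orbit, so this is the notion of a
chain in `T_𝔭` for `T_𝔭 ⊊ 𝔹_𝔭`): `C = {σ^{-i}β : 0 ≤ i ≤ m} ⊆ T` with `σβ ∉ T` and
`σ^{-m-1}β ∉ T`. -/
def IsChainIn (σ : Equiv.Perm B) (T : Set B) (C : Set B) : Prop :=
  ∃ (β : B) (m : ℕ), σ β ∉ T ∧ (σ⁻¹ ^ (m + 1)) β ∉ T ∧
    (∀ i ≤ m, (σ⁻¹ ^ i) β ∈ T) ∧ C = {τ | ∃ i ≤ m, τ = (σ⁻¹ ^ i) β}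

/-- `C̃` for a chain `C`: equals `C` if `m` is odd (i.e. `|C| = m+1` is even), and
`C ∪ {σ^{-m-1}β} = C ∪ σ⁻¹(C)` if `m` is even (i.e. `|C|` odd). -/
def chainExt (σ : Equiv.Perm B) (C : Set B) : Set B :=
  if Odd C.ncard then C ∪ (⇑σ⁻¹ '' C) else C

/-- `T̃ = ⋃_𝔭 T̃_𝔭`: the union of `T` with the extensions `C̃` of all chains `C` in `T`.
(For orbits with `T_𝔭 = 𝔹_𝔭` there are no chains and `T̃_𝔭 = 𝔹_𝔭 = T_𝔭`.) -/
def tilde (σ : Equiv.Perm B) (T : Set B) : Set B :=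
  T ∪ ⋃ (C : Set B) (_ : IsChainIn σ T C), chainExt σ C

/-- `μ_β`: the least `i > 0` with `σ^i β ∉ T` if `T_𝔭 ≠ 𝔹_𝔭`, and `0` if `T_𝔭 = 𝔹_𝔭`. -/
def mu (σ : Equiv.Perm B) (T : Set B) (β : B) : ℕ :=
  if orbit σ β ⊆ T then 0 else sInf {i : ℕ | 0 < i ∧ (σ ^ i) β ∉ T}

/-- `n_β`: the least `i > 0` with `σ^i β ∉ T̃` (meaningful when `T̃_𝔭 ≠ 𝔹_𝔭`). -/
def nn (σ : Equiv.Perm B) (T : Set B) (β : B) : ℕ :=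
  sInf {i : ℕ | 0 < i ∧ (σ ^ i) β ∉ tilde σ T}

/-- `ν_β`: the least `i ≥ 0` with `σ^{-i} β ∉ T` (meaningful when `T_𝔭 ≠ 𝔹_𝔭`). -/
def nu (σ : Equiv.Perm B) (T : Set B) (β : B) : ℕ :=
  sInf {i : ℕ | (σ⁻¹ ^ i) β ∉ T}

/-- `𝒯(T_𝔭) = (𝔹_𝔭 − T̃_𝔭) ∪ σ(T̃_𝔭 − T_𝔭)`, taken globally (union over all `𝔭`). -/
def Tscr (σ : Equiv.Perm B) (T : Set B) : Set B :=
  (tilde σ T)ᶜ ∪ (⇑σ '' (tilde σ T \ T))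

/-- The generating set `⋃_𝔭 𝒢(T_𝔭)`:
`{h_β^{β'} : β ∈ ℋ(T_𝔭), β' ∈ 𝒯(T_𝔭)} ∪ {±b_β : β ∈ T_𝔭}` over all `𝔭`. -/
def Dgen (σ : Equiv.Perm B) (p : ℕ) (T : Set B) : Set (B → ℚ) :=
  {v | ∃ β β', β ∉ T ∧ β' ∈ Tscr σ T ∧ sameOrbit σ β β' ∧ v = hvec σ p β β'}
  ∪ {v | ∃ β ∈ T, v = bsimple σ p β ∨ v = -(bsimple σ p β)}

/-- The cone `𝒟_T`. -/
def D (σ : Equiv.Perm B) (p : ℕ) (T : Set B) : Set (B → ℚ) := cone (Dgen σ p T)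

/-- `h_{σ^{n_β}β}^{β} = -e_{σ^{n_β}β} + p^{n_β} e_β`. -/
def fH (σ : Equiv.Perm B) (p : ℕ) (T : Set B) (β : B) : B → ℚ :=
  -(e ((σ ^ nn σ T β) β)) + ((p : ℚ) ^ nn σ T β) • e β

/-- `b_{σ^{n_β}β}^{β} = e_{σ^{n_β}β} + p^{n_β} e_β`. -/
def fB (σ : Equiv.Perm B) (p : ℕ) (T : Set B) (β : B) : B → ℚ :=
  (e ((σ ^ nn σ T β) β)) + ((p : ℚ) ^ nn σ T β) • e β

/-- The generating set `⋃_𝔭 𝒢′(T_𝔭)`: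
if `𝔹_𝔭 − T̃_𝔭 ≠ ∅` it is `{h_{σ^{n_β}β}^β : β ∈ 𝔹_𝔭 − T̃_𝔭} ∪ {−b_{σ^{n_β}β}^β : β ∈ T̃_𝔭 − T_𝔭}
∪ {±b_β : β ∈ T_𝔭}`, and if `𝔹_𝔭 = T̃_𝔭` it is `{−e_β : β ∈ 𝔹_𝔭 − T_𝔭} ∪ {±b_β : β ∈ T_𝔭}`. -/
def D'gen (σ : Equiv.Perm B) (p : ℕ) (T : Set B) : Set (B → ℚ) :=
  {v | ∃ β, β ∉ tilde σ T ∧ v = fH σ p T β}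
  ∪ {v | ∃ β, β ∈ tilde σ T ∧ β ∉ T ∧ ¬ orbit σ β ⊆ tilde σ T ∧ v = -(fB σ p T β)}
  ∪ {v | ∃ β, β ∉ T ∧ orbit σ β ⊆ tilde σ T ∧ v = -(e β)}
  ∪ {v | ∃ β ∈ T, v = bsimple σ p β ∨ v = -(bsimple σ p β)}

/-- The cone `𝒟′_T`. -/
def D' (σ : Equiv.Perm B) (p : ℕ) (T : Set B) : Set (B → ℚ) := cone (D'gen σ p T)

/-- `f_β(T)` for `β ∉ T`: `h_{σ^{n_β}β}^β` if `β ∈ 𝔹_𝔭 − T̃_𝔭`; `−b_{σ^{n_β}β}^β` if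
`β ∈ T̃_𝔭 − T_𝔭` and `𝔹_𝔭 ≠ T̃_𝔭`; and `−(1+p^{|𝔹_𝔭|}) e_β` if `𝔹_𝔭 = T̃_𝔭`. -/
def fvec (σ : Equiv.Perm B) (p : ℕ) (T : Set B) (β : B) : B → ℚ :=
  if orbit σ β ⊆ tilde σ T then -((1 + (p : ℚ) ^ orbitCard σ β) • e β)
  else if β ∈ tilde σ T then -(fB σ p T β) else fH σ p T β

/-- `𝔹(T) = ⋃_𝔭 𝔹_𝔭(T)`: `β ∈ 𝔹(T)` iff `β ∉ T`, the set `𝔹_𝔭 − T̃_𝔭` is nonempty, and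
`𝔹_𝔭 − T̃_𝔭 ≠ {β}` (this encodes all three cases of the definition of `𝔹_𝔭(T)`). -/
def BT (σ : Equiv.Perm B) (T : Set B) : Set B :=
  {β | β ∉ T ∧ (orbit σ β \ tilde σ T).Nonempty ∧ orbit σ β \ tilde σ T ≠ {β}}

/-- The sign function `ε_T : 𝔹 → {−1,0,1}`. -/
def epsT (σ : Equiv.Perm B) (T : Set B) (β : B) : ℚ :=
  if orbit σ β ⊆ T then 0
  else if β ∈ tilde σ T then (-1 : ℚ) ^ (mu σ T β - 1) else 1

/-- `L^ε[β, β'](κ) = Σ_{0 ≤ i ≤ n} ε(σ^iβ) p^i k_{σ^iβ}`, where `β' = σ^n β` with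
`0 ≤ n < |𝔹_𝔭|`. -/
def Lfun (σ : Equiv.Perm B) (p : ℕ) (ε : B → ℚ) (β β' : B) (κ : B → ℚ) : ℚ :=
  ∑ i ∈ Finset.range (steps0 σ β β' + 1), ε ((σ ^ i) β) * (p : ℚ) ^ i * κ ((σ ^ i) β)

/-- `L^ε[β] = L^ε[β, σ⁻¹β]`. -/
def Lfun1 (σ : Equiv.Perm B) (p : ℕ) (ε : B → ℚ) (β : B) (κ : B → ℚ) : ℚ :=
  Lfun σ p ε β (σ⁻¹ β) κ

/-- `L_{T,β}` for `β ∈ 𝔹 − T`: `L^{ε_T}[σ^{μ_β}β]` if `β ∈ 𝔹 − T̃`, and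
`L^{ε_T}[β, σ^{μ_β−1}β]` if `β ∈ T̃ − T`. -/
def LT (σ : Equiv.Perm B) (p : ℕ) (T : Set B) (β : B) (κ : B → ℚ) : ℚ :=
  if β ∈ tilde σ T then Lfun σ p (epsT σ T) β ((σ ^ (mu σ T β - 1)) β) κ
  else Lfun1 σ p (epsT σ T) ((σ ^ mu σ T β) β) κ

/-- `ε_{T,f_β}`: negates `ε_T` on `{β, σβ, …, σ^{μ_β−1}β}`. -/
def epsTf (σ : Equiv.Perm B) (T : Set B) (β τ : B) : ℚ :=
  if ∃ i < mu σ T β, τ = (σ ^ i) β then -(epsT σ T τ) else epsT σ T τ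

/-- `L_{T,f_β,τ}` for `β ∈ 𝔹(T)` and `τ ∈ 𝔹 − (T ∪ {σ^{n_β}β})`, with `β′ = σ^{n_β}β` and
`β̃ = σ^{μ_{β′}}β′`. -/
def LTf (σ : Equiv.Perm B) (p : ℕ) (T : Set B) (β τ : B) (κ : B → ℚ) : ℚ :=
  if τ = β then
    (if β ∈ tilde σ T then
      Lfun1 σ p (epsTf σ T β) ((σ ^ mu σ T ((σ ^ nn σ T β) β)) ((σ ^ nn σ T β) β)) κ
    else
      Lfun σ p (epsTf σ T β) β (σ⁻¹ ((σ ^ mu σ T ((σ ^ nn σ T β) β)) ((σ ^ nn σ T β) β))) κ)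
  else
    (if τ ∈ tilde σ T then LT σ p T τ κ
     else Lfun1 σ p (epsTf σ T β) ((σ ^ mu σ T τ) τ) κ)

/-- `𝒟_{T,f_β} = {κ : L_{T,f_β,τ}(κ) ≥ 0 for all τ ∈ 𝔹 − (T ∪ {σ^{n_β}β})}`. -/
def Df (σ : Equiv.Perm B) (p : ℕ) (T : Set B) (β : B) : Set (B → ℚ) :=
  {κ | ∀ τ, τ ∉ T → τ ≠ (σ ^ nn σ T β) β → 0 ≤ LTf σ p T β τ κ}

/-- `i_T : ℚ^𝔹 → ℚ^{𝔹−T}`, the linear map with `i_T(e_β) = 0` if `T_𝔭 = 𝔹_𝔭` and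
`i_T(e_β) = (−p)^{ν_β} e_{σ^{−ν_β}β}` otherwise. -/
def iT (σ : Equiv.Perm B) (p : ℕ) (T : Set B) (κ : B → ℚ) : {β : B // β ∉ T} → ℚ :=
  fun β₀ => ∑ β : B, κ β *
    (if orbit σ β ⊆ T then 0
     else if (σ⁻¹ ^ nu σ T β) β = β₀.1 then (-(p : ℚ)) ^ nu σ T β else 0)

/-- Restriction to `ℚ^{𝔹−T}` of a vector of `ℚ^𝔹` (used for vectors supported on `𝔹 − T`). -/
def res (T : Set B) (v : B → ℚ) : {β : B // β ∉ T} → ℚ := fun β => v β.1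

/-- The generating set `𝒢^{T-red}(T) = ⋃_𝔭 𝒢_𝔭^{T-red}(T)` of the reduced cone. -/
def Gred (σ : Equiv.Perm B) (p : ℕ) (T : Set B) : Set ({β : B // β ∉ T} → ℚ) :=
  {v | ∃ β, β ∉ tilde σ T ∧ v = res T (fH σ p T β)}
  ∪ {v | ∃ β, β ∈ tilde σ T ∧ β ∉ T ∧ ¬ orbit σ β ⊆ tilde σ T ∧ v = res T (-(fB σ p T β))}
  ∪ {v | ∃ β, β ∉ T ∧ orbit σ β ⊆ tilde σ T ∧ v = res T (-(e β))}

/-- The minimal cone `𝒞^min_T = i_T(𝒟_T ∩ ⋂_{β ∈ 𝔹(T)} 𝒟_{T,f_β}) ⊆ ℚ^{𝔹−T}`. -/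
def Cmin (σ : Equiv.Perm B) (p : ℕ) (T : Set B) : Set ({β : B // β ∉ T} → ℚ) :=
  iT σ p T '' (D σ p T ∩ {κ | ∀ β ∈ BT σ T, κ ∈ Df σ p T β})

/-- `g_β`: `b_β` if `β ∈ T_𝔭`; `−e_β` if `β ∈ T̃_𝔭 − T_𝔭` and `𝔹_𝔭 = T̃_𝔭`;
`−b_{σ^{n_β}β}^β` if `β ∈ T̃_𝔭 − T_𝔭` and `𝔹_𝔭 ≠ T̃_𝔭`; `h_{σ^{n_β}β}^β` if `β ∈ 𝔹_𝔭 − T̃_𝔭`. -/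
def gvec (σ : Equiv.Perm B) (p : ℕ) (T : Set B) (β : B) : B → ℚ :=
  if β ∈ T then bsimple σ p β
  else if orbit σ β ⊆ tilde σ T then -(e β)
  else if β ∈ tilde σ T then -(fB σ p T β)
  else fH σ p T β

/-- The map `σ̄ : β ↦ σ^{n_β} β`. -/
def sigbar (σ : Equiv.Perm B) (T : Set B) (β : B) : B := (σ ^ nn σ T β) β

/-- `h_β = -e_β + p e_{σ⁻¹β}` as an element of `ℤ^𝔹`. -/
def hZ (σ : Equiv.Perm B) (p : ℕ) (β : B) : B → ℤ :=
  fun τ => (if τ = β then -1 else 0) + (if τ = σ⁻¹ β then (p : ℤ) else 0)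

end GO

end

/-!
The map `i_T` satisfies two rules: `i_T e_β` is the basis vector of `ℚ^{𝔹−T}` at `β` for
`β ∉ T`, and `i_T e_β = -p • i_T e_{σ⁻¹β}` for `β ∈ T`. By the second rule `i_T` kills `b_β` for
`β ∈ T`; by the first it is surjective, so its kernel has dimension `|T|`. A linear relation
`∑ c_β b_β = 0` means `c_β = -p c_{σβ}` for all `β`; summing absolute values over `𝔹` gives
`∑ |c_β| = p ∑ |c_β|`, so `c = 0` as `p ≠ 1`. The `b_β` with `β ∈ T` are thus `|T|` independent
vectors of a `|T|`-dimensional kernel.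
-/

namespace GO

section LinearAlgebra

theorem eq_zero_of_forall_eq_mul_apply_perm {ι R : Type*} [Finite ι] [Ring R] [LinearOrder R]
    [IsStrictOrderedRing R] (σ : Equiv.Perm ι) {a : R} (ha : |a| ≠ 1) {c : ι → R}
    (hc : ∀ i, c i = a * c (σ i)) : c = 0 := by
  have := Fintype.ofFinite ι
  have hsum : ∑ i, |c i| = |a| * ∑ i, |c i| :=
    calc ∑ i, |c i| = ∑ i, |a| * |c (σ i)| :=
          Finset.sum_congr rfl fun i _ => by rw [← abs_mul, ← hc]
      _ = |a| * ∑ i, |c i| := by rw [← Finset.mul_sum, Equiv.sum_comp σ fun i => |c i|]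
  have hzero : ∑ i, |c i| = 0 := by_contra fun hne => ha ((right_eq_mul₀ hne).1 hsum)
  simpa [Finset.sum_eq_zero_iff_of_nonneg, funext_iff] using hzero

theorem ker_eq_span_range_of_linearIndependent {K V W ι : Type*} [DivisionRing K]
    [AddCommGroup V] [Module K V] [FiniteDimensional K V] [AddCommGroup W] [Module K W]
    [Fintype ι] {f : V →ₗ[K] W} (hf : Function.Surjective f) {v : ι → V}
    (hv : LinearIndependent K v) (hfv : ∀ i, f (v i) = 0)
    (hcard : Fintype.card ι + Module.finrank K W = Module.finrank K V) :
    f.ker = Submodule.span K (Set.range v) := by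
  have hle : Submodule.span K (Set.range v) ≤ f.ker :=
    Submodule.span_le.2 (Set.range_subset_iff.2 hfv)
  refine (Submodule.eq_of_le_of_finrank_eq hle ?_).symm
  have hrank := f.finrank_range_add_finrank_ker
  rw [LinearMap.range_eq_top.2 hf, finrank_top] at hrank
  rw [finrank_span_eq_card hv]
  lia

open scoped Pointwise in
theorem cone_union_neg {V : Type*} [AddCommGroup V] [Module ℚ V] (S : Set V) :
    cone (S ∪ -S) = Submodule.span ℚ S := by
  ext x
  constructor
  · rintro ⟨n, c, v, -, hv, rfl⟩
    have hvS : ∀ i, v i ∈ Submodule.span ℚ S := fun i =>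
      (hv i).elim (Submodule.subset_span ·) fun h =>
        neg_mem_iff.1 (Submodule.subset_span (Set.mem_neg.1 h))
    exact Submodule.sum_mem _ fun i _ => Submodule.smul_mem _ _ (hvS i)
  · intro hx
    obtain ⟨n, c, v, rfl⟩ := Submodule.mem_span_set'.1 hx
    refine ⟨n, fun i => |c i|, fun i => if 0 ≤ c i then v i else -v i,
      fun i => abs_nonneg _, fun i => ?_, Finset.sum_congr rfl fun i _ => ?_⟩
    · dsimp only
      split_ifs
      · exact Or.inl (v i).2
      · exact Or.inr (by simp)
    · dsimp only
      split_ifs with hc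
      · rw [abs_of_nonneg hc]
      · rw [abs_of_neg (not_le.1 hc), neg_smul_neg]

end LinearAlgebra

section Orbit

variable {B : Type*} (σ : Equiv.Perm B)

theorem nu_of_notMem {T : Set B} {β : B} (hβ : β ∉ T) : nu σ T β = 0 :=
  Nat.sInf_eq_zero.2 (Or.inl hβ)

variable [Finite B]

theorem mem_orbit_iff_sameCycle {β τ : B} : τ ∈ orbit σ β ↔ σ.SameCycle β τ :=
  ⟨fun ⟨n, hn⟩ => ⟨n, by simpa using hn⟩, fun h => h.exists_nat_pow_eq⟩

theorem orbit_inv_apply (β : B) : orbit σ (σ⁻¹ β) = orbit σ β := by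
  ext τ
  rw [mem_orbit_iff_sameCycle, mem_orbit_iff_sameCycle, Equiv.Perm.inv_def,
    Equiv.Perm.sameCycle_symm_apply_left]

theorem exists_inv_pow_apply_notMem {T : Set B} {β : B} (h : ¬ orbit σ β ⊆ T) :
    ∃ i : ℕ, (σ⁻¹ ^ i) β ∉ T := by
  obtain ⟨τ, hτ, hτT⟩ := Set.not_subset.1 h
  obtain ⟨i, rfl⟩ := ((mem_orbit_iff_sameCycle σ).1 hτ).inv.exists_nat_pow_eq
  exact ⟨i, hτT⟩

theorem nu_eq_nu_inv_apply_add_one {T : Set B} {β : B} (hβ : β ∈ T) (h : ¬ orbit σ β ⊆ T) :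
    nu σ T β = nu σ T (σ⁻¹ β) + 1 := by
  have hpos : 1 ≤ nu σ T β := by
    rw [Nat.one_le_iff_ne_zero, nu, Ne, Nat.sInf_eq_zero, not_or]
    exact ⟨not_not.2 hβ, Set.Nonempty.ne_empty (exists_inv_pow_apply_notMem σ h)⟩
  simpa only [nu, pow_succ, Equiv.Perm.mul_apply] using (Nat.sInf_add hpos).symm

end Orbit

theorem sum_smul_bsimple_apply {B : Type*} [Fintype B] [DecidableEq B] (σ : Equiv.Perm B) (p : ℕ)
    (c : B → ℚ) (β : B) : (∑ τ, c τ • bsimple σ p τ) β = c β + p * c (σ β) := by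
  simp [bsimple, e, Finset.sum_add_distrib, Equiv.eq_symm_apply, mul_comm]

theorem linearIndependent_bsimple {B : Type*} [Finite B] [DecidableEq B] (σ : Equiv.Perm B)
    {p : ℕ} (hp : p ≠ 1) : LinearIndependent ℚ (bsimple σ p) := by
  have := Fintype.ofFinite B
  rw [Fintype.linearIndependent_iff]
  intro c hc
  have hrec : ∀ β, c β = -(p : ℚ) * c (σ β) := fun β => by
    have hβ : c β + p * c (σ β) = 0 := by rw [← sum_smul_bsimple_apply, hc, Pi.zero_apply]
    linarith
  exact congrFun (eq_zero_of_forall_eq_mul_apply_perm σ (by simpa using hp) hrec)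

variable {B : Type*} [Fintype B] [DecidableEq B] (σ : Equiv.Perm B) (p : ℕ) (T : Set B)

/-- The map `i_T`, bundled as a `ℚ`-linear map. -/
noncomputable def iTLinear : (B → ℚ) →ₗ[ℚ] ({β : B // β ∉ T} → ℚ) where
  toFun := iT σ p T
  map_add' κ κ' := by
    ext β₀
    simp only [iT, Pi.add_apply, add_mul, Finset.sum_add_distrib]
  map_smul' a κ := by
    ext β₀
    simp only [iT, Pi.smul_apply, smul_eq_mul, Finset.mul_sum, mul_assoc, RingHom.id_apply]

theorem iTLinear_e_apply (β : B) (β₀ : {β : B // β ∉ T}) :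
    iTLinear σ p T (e β) β₀ =
      if orbit σ β ⊆ T then 0
      else if (σ⁻¹ ^ nu σ T β) β = β₀ then (-(p : ℚ)) ^ nu σ T β else 0 := by
  simp only [iTLinear, iT, e, LinearMap.coe_mk, AddHom.coe_mk, ite_mul, one_mul, zero_mul,
    Finset.sum_ite_eq', Finset.mem_univ, if_true]

theorem iTLinear_e_of_notMem (β : {β : B // β ∉ T}) :
    iTLinear σ p T (e β) = Pi.single β 1 := by
  have horbit : ¬ orbit σ β ⊆ T := fun h => β.2 (h ⟨0, rfl⟩)
  ext β₀
  simp [iTLinear_e_apply, horbit, nu_of_notMem σ β.2, Pi.single_apply, Subtype.ext_iff, eq_comm]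

theorem iTLinear_e_of_mem {β : B} (hβ : β ∈ T) :
    iTLinear σ p T (e β) = -(p : ℚ) • iTLinear σ p T (e (σ⁻¹ β)) := by
  ext β₀
  rw [Pi.smul_apply, iTLinear_e_apply, iTLinear_e_apply, orbit_inv_apply]
  by_cases h : orbit σ β ⊆ T
  · simp [h]
  · rw [nu_eq_nu_inv_apply_add_one σ hβ h]
    simp [h, pow_succ, mul_comm]

theorem iTLinear_bsimple {β : B} (hβ : β ∈ T) : iTLinear σ p T (bsimple σ p β) = 0 := by
  rw [bsimple, map_add, map_smul, iTLinear_e_of_mem σ p T hβ, neg_smul, neg_add_cancel]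

theorem iTLinear_surjective : Function.Surjective (iTLinear σ p T) := by
  intro x
  refine ⟨∑ β, x β • e (β : B), ?_⟩
  simp_rw [map_sum, map_smul, iTLinear_e_of_notMem]
  exact (pi_eq_sum_univ' x).symm

variable {p}

theorem ker_iTLinear (hp : p ≠ 1) :
    (iTLinear σ p T).ker = Submodule.span ℚ (bsimple σ p '' T) := by
  rw [Set.image_eq_range]
  refine ker_eq_span_range_of_linearIndependent (iTLinear_surjective σ p T)
    ((linearIndependent_bsimple σ hp).comp _ Subtype.val_injective)
    (fun β => iTLinear_bsimple σ p T β.2) ?_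
  rw [Module.finrank_fintype_fun_eq_card, Module.finrank_fintype_fun_eq_card,
    ← Fintype.card_sum, Fintype.card_congr (Equiv.sumCompl (· ∈ T))]

end GO

open scoped Pointwise in
theorem statement5_general {B : Type*} [Fintype B] [DecidableEq B]
    (σ : Equiv.Perm B) (p : ℕ) (hp : p ≠ 1) (T : Set B) :
    {κ : B → ℚ | GO.iT σ p T κ = 0}
      = (Submodule.span ℚ {v : B → ℚ | ∃ β ∈ T, v = GO.bsimple σ p β} : Set (B → ℚ)) ∧
    LinearIndependent ℚ (fun β : T => GO.bsimple σ p (β : B)) ∧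
    {κ : B → ℚ | GO.iT σ p T κ = 0}
      = GO.cone {v : B → ℚ | ∃ β ∈ T, v = GO.bsimple σ p β ∨ v = -(GO.bsimple σ p β)} := by
  have hgen : {v | ∃ β ∈ T, v = GO.bsimple σ p β} = GO.bsimple σ p '' T := by
    simp only [Set.image, eq_comm]
  have hgen_neg : {v | ∃ β ∈ T, v = GO.bsimple σ p β ∨ v = -GO.bsimple σ p β} =
      GO.bsimple σ p '' T ∪ -(GO.bsimple σ p '' T) := by
    ext v
    simp only [Set.mem_union, Set.mem_neg, Set.mem_image, Set.mem_ofPred_eq]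
    grind
  have hker : {κ | GO.iT σ p T κ = 0} = (Submodule.span ℚ (GO.bsimple σ p '' T) : Set (B → ℚ)) :=
    congrArg SetLike.coe (GO.ker_iTLinear σ T hp)
  rw [hgen, hgen_neg, GO.cone_union_neg]
  exact ⟨hker, (GO.linearIndependent_bsimple σ hp).comp _ Subtype.val_injective, hker⟩

/-- the kernel of `i_T` equals the `ℚ`-span of `{b_β : β ∈ T}`, the family
`{b_β : β ∈ T}` is linearly independent, and the kernel coincides with the `ℚ^{≥0}`-cone
generated by `{b_β, −b_β : β ∈ T}`. -/
theorem statement5 {B : Type*} [Fintype B] [DecidableEq B] [Nonempty B]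
    (σ : Equiv.Perm B) (p : ℕ) (hp : p.Prime) (T : Set B) :
    {κ : B → ℚ | GO.iT σ p T κ = 0}
      = (Submodule.span ℚ {v : B → ℚ | ∃ β ∈ T, v = GO.bsimple σ p β} : Set (B → ℚ)) ∧
    LinearIndependent ℚ (fun β : T => GO.bsimple σ p (β : B)) ∧
    {κ : B → ℚ | GO.iT σ p T κ = 0}
      = GO.cone {v : B → ℚ | ∃ β ∈ T, v = GO.bsimple σ p β ∨ v = -(GO.bsimple σ p β)} :=
  statement5_general σ p hp.ne_one T
end

section
/- Let T ⊆ 𝔹 and let 𝔹_𝔭 be an orbit with 𝔹_𝔭 − T̃_𝔭 ≠ ∅. Let β₁ ∈ T̃_𝔭 − T_𝔭 and suppose that β := σ^{μ_{β₁}}β₁ lies in 𝔹_𝔭 − T̃_𝔭. Set T″ = T ∪ {β}. Then 𝒟_{T″} ∩ {κ ∈ ℚ^𝔹 : L_{T,β₁}(κ) ≥ 0} ⊆ 𝒟_T. -/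
/- Setting: `B` is the finite nonempty set 𝔹 equipped with a permutation `σ` (Frobenius),
and `p` is a prime.  Weights live in `ℚ^𝔹 = (B → ℚ)`.  The orbits `𝔹_𝔭` of `σ` are the sets
`orbit σ β`, and for `T ⊆ 𝔹` we have `T_𝔭 = T ∩ orbit σ β`. -/

open scoped Classical

/-!
Write `b = β₁`, let `M` be its exit time from `T`, which is even because `b ∈ T̃`, and let
`c = σ^M b`, so that `T″ = T ∪ {c}`. The vectors `± b_τ` with `τ ∈ T` are generators of `𝒟_T`, so
membership in `𝒟_T` may be tested modulo them, and modulo them `e_{σ^i b} ≡ (-p)^i e_b` for `i < M`.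

The vector `b_c` lies in `𝒟_T`, and `L = L_{T,b}` vanishes on the `b_τ` with `τ ∈ T` and takes the
value `p^M > 0` on `b_c`. It therefore suffices that the projection `v ↦ v - p^{-M} L(v) b_c` maps
the generators of `𝒟_{T″}` into `𝒟_T`: a vector with `L ≥ 0` is the sum of its projection and a
nonnegative multiple of `b_c`. The projection kills `b_c`, fixes the `b_τ` with `τ ∈ T`, and
modulo them replaces `e_b` by `p^{-M} e_c`. It thus turns `h_x^y` into a positive multiple of the
`h`-vector in which an index equal to `b` has been moved `M` steps forward to `c`; the powers of `p`
match because the number of steps from `y` to `x` changes by the same amount, and the new vector is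
a generator of `𝒟_T`.
-/

namespace GO

section Orbits

variable {B : Type*} {σ : Equiv.Perm B} {x y z : B} {k n : ℕ}

theorem pow_add_apply_eq_pow_apply : (σ ^ (n + k)) x = (σ ^ k) y ↔ (σ ^ n) x = y := by
  rw [add_comm, pow_add, Equiv.Perm.mul_apply, EmbeddingLike.apply_eq_iff_eq]

theorem inv_apply_pow_succ_apply (σ : Equiv.Perm B) (n : ℕ) (x : B) :
    σ⁻¹ ((σ ^ (n + 1)) x) = (σ ^ n) x := by
  rw [pow_succ', Equiv.Perm.mul_apply, Equiv.Perm.inv_def, Equiv.symm_apply_apply]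

theorem inv_pow_apply_pow_apply (σ : Equiv.Perm B) (x : B) (hkn : k ≤ n) :
    (σ⁻¹ ^ k) ((σ ^ n) x) = (σ ^ (n - k)) x := by
  rw [inv_pow, Equiv.Perm.inv_eq_iff_eq, ← Equiv.Perm.mul_apply, ← pow_add,
    Nat.add_sub_cancel' hkn]

theorem setOf_inv_pow_apply_eq_image (σ : Equiv.Perm B) (n : ℕ) (x : B) :
    {τ | ∃ i ≤ n, τ = (σ⁻¹ ^ i) ((σ ^ (n + 1)) x)} = (fun i ↦ (σ ^ i) x) '' Set.Ioo 0 (n + 2) := by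
  ext τ
  constructor
  · rintro ⟨i, hi, rfl⟩
    exact ⟨n + 1 - i, ⟨by omega, by omega⟩, (inv_pow_apply_pow_apply σ x (by omega)).symm⟩
  · rintro ⟨i, ⟨hi, hin⟩, rfl⟩
    refine ⟨n + 1 - i, by omega, ?_⟩
    rw [inv_pow_apply_pow_apply σ x (by omega), Nat.sub_sub_self (by omega)]

theorem sameOrbit.trans (hxy : sameOrbit σ x y) (hyz : sameOrbit σ y z) : sameOrbit σ x z := by
  obtain ⟨m, rfl⟩ := hxy
  obtain ⟨n, rfl⟩ := hyz
  exact ⟨n + m, by rw [pow_add, Equiv.Perm.mul_apply]⟩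

theorem mem_periodicPts_of_sameOrbit (hy : y ∈ Function.periodicPts σ) (h : sameOrbit σ x y) :
    x ∈ Function.periodicPts σ := by
  obtain ⟨n, rfl⟩ := h
  obtain ⟨N, hN, hper⟩ := hy
  refine Function.mk_mem_periodicPts hN ?_
  rw [Function.IsPeriodicPt, Function.IsFixedPt, Equiv.Perm.iterate_eq_pow] at hper ⊢
  rwa [← Equiv.Perm.mul_apply, ← pow_add, pow_add_apply_eq_pow_apply] at hper

theorem exists_pos_pow_apply_eq (hx : x ∈ Function.periodicPts σ) (h : sameOrbit σ x y) :
    ∃ n, 0 < n ∧ (σ ^ n) y = x := by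
  obtain ⟨n, rfl⟩ := h
  obtain ⟨N, hN, hper⟩ := hx
  have hle : n + 1 ≤ N * (n + 1) := Nat.le_mul_of_pos_left _ hN
  refine ⟨N * (n + 1) - n, by omega, ?_⟩
  rw [← Equiv.Perm.mul_apply, ← pow_add, Nat.sub_add_cancel (by omega),
    ← Equiv.Perm.iterate_eq_pow]
  exact hper.mul_const (n + 1)

theorem sameOrbit.symm (hx : x ∈ Function.periodicPts σ) (h : sameOrbit σ x y) :
    sameOrbit σ y x :=
  let ⟨n, _, hn⟩ := exists_pos_pow_apply_eq hx h
  ⟨n, hn⟩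

theorem steps_eq_of_isLeast (h : IsLeast {n : ℕ | 0 < n ∧ (σ ^ n) x = y} n) : steps σ x y = n :=
  h.csInf_eq

theorem steps_pow_apply_pow_apply (σ : Equiv.Perm B) (k : ℕ) (x y : B) :
    steps σ ((σ ^ k) x) ((σ ^ k) y) = steps σ x y := by
  simp only [steps, ← Equiv.Perm.mul_apply, ← pow_add, pow_add_apply_eq_pow_apply]

theorem steps_pow_apply_left (hy : ∃ n, 0 < n ∧ (σ ^ n) x = y)
    (hrun : ∀ i ∈ Set.Ioc 0 k, (σ ^ i) x ≠ y) : steps σ ((σ ^ k) x) y + k = steps σ x y := by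
  obtain ⟨hpos, hstep⟩ : 0 < steps σ x y ∧ (σ ^ steps σ x y) x = y := Nat.sInf_mem hy
  have hk : k < steps σ x y := by
    by_contra! hle
    exact hrun _ ⟨hpos, hle⟩ hstep
  suffices steps σ ((σ ^ k) x) y = steps σ x y - k by omega
  refine steps_eq_of_isLeast ⟨⟨by omega, ?_⟩, fun n ⟨hn, hxy⟩ ↦ ?_⟩
  · rwa [← Equiv.Perm.mul_apply, ← pow_add, Nat.sub_add_cancel hk.le]
  · rw [← Equiv.Perm.mul_apply, ← pow_add] at hxy
    exact Nat.sub_le_of_le_add (Nat.sInf_le ⟨by omega, hxy⟩)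

theorem steps_pow_apply_right (hy : ∃ n, 0 < n ∧ (σ ^ n) x = y)
    (hrun : ∀ i < k, (σ ^ i) y ≠ x) : steps σ x ((σ ^ k) y) = steps σ x y + k := by
  obtain ⟨n, hn, hxy⟩ := hy
  rw [← steps_pow_apply_pow_apply σ k x y]
  refine (steps_pow_apply_left ⟨k + n, by omega, ?_⟩ fun i ⟨hi, hik⟩ hxi ↦ ?_).symm
  · rw [pow_add, Equiv.Perm.mul_apply, hxy]
  · refine hrun (k - i) (by omega) ((pow_add_apply_eq_pow_apply (k := i)).1 ?_)
    rw [Nat.sub_add_cancel hik, hxi]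

end Orbits

/-- `n` is the first positive time at which the forward `σ`-trajectory of `x` lies outside `T`.
Whenever such a time exists it is `mu σ T x`, but unlike `mu` it carries no default value. -/
def IsExitTime {B : Type*} (σ : Equiv.Perm B) (T : Set B) (x : B) (n : ℕ) : Prop :=
  IsLeast {i : ℕ | 0 < i ∧ (σ ^ i) x ∉ T} n

section ExitTime

variable {B : Type*} {σ : Equiv.Perm B} {T : Set B} {x y : B} {i m n : ℕ}

namespace IsExitTime

theorem pos (h : IsExitTime σ T x n) : 0 < n := h.1.1

theorem pow_apply_notMem (h : IsExitTime σ T x n) : (σ ^ n) x ∉ T := h.1.2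

theorem pow_apply_mem (h : IsExitTime σ T x n) (hi : 0 < i) (hin : i < n) : (σ ^ i) x ∈ T := by
  by_contra hiT
  exact hin.not_ge (h.2 ⟨hi, hiT⟩)

theorem pow_apply_ne (h : IsExitTime σ T x n) (hx : x ∉ T) (hi : 0 < i) (hin : i < n) :
    (σ ^ i) x ≠ x :=
  fun heq ↦ hx (heq ▸ h.pow_apply_mem hi hin)

theorem injOn (h : IsExitTime σ T x n) (hx : x ∉ T) :
    Set.InjOn (fun i ↦ (σ ^ i) x) (Set.Iio n) := by
  intro i (hi : i < n) j (hj : j < n) (hij : (σ ^ i) x = (σ ^ j) x)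
  wlog hle : i ≤ j generalizing i j
  · exact (this hj hi hij.symm (by omega)).symm
  obtain ⟨k, rfl⟩ := Nat.exists_eq_add_of_le' hle
  have hk : (σ ^ k) x = x := pow_add_apply_eq_pow_apply.1 hij.symm
  by_contra hne
  exact h.pow_apply_ne hx (by omega) (by omega) hk

theorem eq_of_pow_apply_eq (hxm : IsExitTime σ T x m) (hyn : IsExitTime σ T y n) (hx : x ∉ T)
    (hy : y ∉ T) (hxy : (σ ^ m) x = (σ ^ n) y) : x = y := by
  wlog hle : m ≤ n generalizing x y m n
  · exact (this hyn hxm hy hx hxy.symm (by omega)).symm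
  obtain ⟨k, rfl⟩ := Nat.exists_eq_add_of_le' hle
  have hk : (σ ^ k) y = x := pow_add_apply_eq_pow_apply.1 hxy.symm
  rcases k.eq_zero_or_pos with rfl | hpos
  · exact hk.symm
  · exact absurd (hk ▸ hyn.pow_apply_mem hpos (by have := hxm.pos; omega)) hx

theorem mu_eq (h : IsExitTime σ T x n) : mu σ T x = n := by
  rw [mu, if_neg fun horbit ↦ h.pow_apply_notMem (horbit ⟨n, rfl⟩)]
  exact h.csInf_eq

theorem pow_apply (h : IsExitTime σ T x n) (hi : i < n) : IsExitTime σ T ((σ ^ i) x) (n - i) := by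
  refine ⟨⟨by omega, ?_⟩, fun j ⟨hj, hjT⟩ ↦ ?_⟩
  · rw [← Equiv.Perm.mul_apply, ← pow_add, Nat.sub_add_cancel hi.le]
    exact h.pow_apply_notMem
  · rw [← Equiv.Perm.mul_apply, ← pow_add] at hjT
    exact Nat.sub_le_of_le_add (h.2 ⟨by omega, hjT⟩)

end IsExitTime

theorem exists_isExitTime_le (hn : 0 < n) (hxn : (σ ^ n) x ∉ T) :
    ∃ m ≤ n, IsExitTime σ T x m :=
  ⟨sInf {i : ℕ | 0 < i ∧ (σ ^ i) x ∉ T},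
    Nat.sInf_le ⟨hn, hxn⟩, Nat.sInf_mem ⟨n, hn, hxn⟩, fun _ ↦ Nat.sInf_le⟩

theorem isChainIn_iff {C : Set B} :
    IsChainIn σ T C ↔ ∃ x n, x ∉ T ∧ 1 < n ∧ IsExitTime σ T x n ∧
      C = (fun i ↦ (σ ^ i) x) '' Set.Ioo 0 n := by
  constructor
  · rintro ⟨β, m, htop, hbot, hmem, rfl⟩
    obtain ⟨x, rfl⟩ := (σ ^ (m + 1)).surjective β
    rw [inv_pow_apply_pow_apply σ x le_rfl, Nat.sub_self] at hbot
    refine ⟨x, m + 2, hbot, by omega, ⟨⟨by omega, ?_⟩, fun i ⟨hi, hiT⟩ ↦ ?_⟩,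
      setOf_inv_pow_apply_eq_image σ m x⟩
    · rwa [pow_succ', Equiv.Perm.mul_apply]
    · by_contra! hlt
      apply hiT
      simpa only [inv_pow_apply_pow_apply σ x (show m + 1 - i ≤ m + 1 by omega),
        Nat.sub_sub_self (show i ≤ m + 1 by omega)] using hmem (m + 1 - i) (by omega)
  · rintro ⟨x, n, hx, hn, hexit, rfl⟩
    obtain ⟨m, rfl⟩ := Nat.exists_eq_add_of_le' hn
    refine ⟨(σ ^ (m + 1)) x, m, ?_, ?_, fun i hi ↦ ?_, (setOf_inv_pow_apply_eq_image σ m x).symm⟩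
    · rw [← Equiv.Perm.mul_apply, ← pow_succ']
      exact hexit.pow_apply_notMem
    · rwa [inv_pow_apply_pow_apply σ x le_rfl, Nat.sub_self]
    · rw [inv_pow_apply_pow_apply σ x (by omega)]
      exact hexit.pow_apply_mem (by omega) (by omega)

theorem chainExt_of_isExitTime (hx : x ∉ T) (hn : 1 < n) (h : IsExitTime σ T x n) :
    chainExt σ ((fun i ↦ (σ ^ i) x) '' Set.Ioo 0 n) =
      (fun i ↦ (σ ^ i) x) '' if Even n then Set.Iio n else Set.Ioo 0 n := by
  have hcard : ((fun i ↦ (σ ^ i) x) '' Set.Ioo 0 n).ncard = n - 1 := by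
    rw [((h.injOn hx).mono fun i hi ↦ hi.2).ncard_image, Set.ncard_Ioo_nat, Nat.sub_zero]
  have hparity : Odd (n - 1) ↔ Even n := by
    rw [Nat.odd_sub hn.le]; simp
  rw [chainExt, hcard]
  simp only [hparity]
  split_ifs with heven
  · ext τ
    constructor
    · rintro (⟨i, hi, rfl⟩ | ⟨_, ⟨i, ⟨hi, hin⟩, rfl⟩, rfl⟩)
      · exact ⟨i, hi.2, rfl⟩
      · obtain ⟨j, rfl⟩ := Nat.exists_eq_add_of_le' hi
        exact ⟨j, by simp only [Set.mem_Iio]; omega, (inv_apply_pow_succ_apply σ j x).symm⟩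
    · rintro ⟨i, hi, rfl⟩
      rcases i.eq_zero_or_pos with rfl | hpos
      · exact Or.inr ⟨_, ⟨1, ⟨one_pos, hn⟩, rfl⟩, inv_apply_pow_succ_apply σ 0 x⟩
      · exact Or.inl ⟨i, ⟨hpos, hi⟩, rfl⟩
  · rfl

theorem mem_tilde_iff :
    x ∈ tilde σ T ↔ x ∈ T ∨ ∃ n, Even n ∧ IsExitTime σ T x n := by
  simp only [tilde, Set.mem_union, Set.mem_iUnion, exists_prop]
  constructor
  · rintro (hxT | ⟨C, hC, hxC⟩)
    · exact Or.inl hxT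
    obtain ⟨y, n, hy, hn, hexit, rfl⟩ := isChainIn_iff.1 hC
    rw [chainExt_of_isExitTime hy hn hexit] at hxC
    obtain ⟨i, hi, rfl⟩ := hxC
    rcases i.eq_zero_or_pos with rfl | hpos
    · split_ifs at hi with heven
      · exact Or.inr ⟨n, heven, hexit⟩
      · exact absurd hi.1 (lt_irrefl 0)
    · refine Or.inl (hexit.pow_apply_mem hpos ?_)
      split_ifs at hi
      exacts [hi, hi.2]
  · rintro (hxT | ⟨n, heven, hexit⟩)
    · exact Or.inl hxT
    by_cases hxT : x ∈ T
    · exact Or.inl hxT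
    have hn : 1 < n := by
      obtain ⟨m, rfl⟩ := heven
      have := hexit.pos
      omega
    refine Or.inr ⟨_, isChainIn_iff.2 ⟨x, n, hxT, hn, hexit, rfl⟩, ?_⟩
    rw [chainExt_of_isExitTime hxT hn hexit, if_pos heven]
    exact ⟨0, hexit.pos, rfl⟩

theorem IsExitTime.mem_tilde (h : IsExitTime σ T x n) (hn : Even n) : x ∈ tilde σ T :=
  mem_tilde_iff.2 (Or.inr ⟨n, hn, h⟩)

theorem exists_even_isExitTime (hx : x ∈ tilde σ T) (hxT : x ∉ T) :
    ∃ n, Even n ∧ IsExitTime σ T x n :=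
  (mem_tilde_iff.1 hx).resolve_left hxT

theorem apply_mem_of_mem_tilde (hx : x ∈ tilde σ T) (hxT : x ∉ T) : σ x ∈ T := by
  obtain ⟨n, ⟨m, rfl⟩, hexit⟩ := exists_even_isExitTime hx hxT
  have := hexit.pos
  exact hexit.pow_apply_mem one_pos (by omega)

end ExitTime

section InsertExit

variable {B : Type*} {σ : Equiv.Perm B} {T : Set B} {b x : B} {M n : ℕ}

theorem pow_apply_mem_insert_exit (hM : IsExitTime σ T b M) {i : ℕ} (hi : i ∈ Set.Ioc 0 M) :
    (σ ^ i) b ∈ insert ((σ ^ M) b) T := by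
  rcases hi.2.lt_or_eq with hlt | rfl
  · exact Or.inr (hM.pow_apply_mem hi.1 hlt)
  · exact Or.inl rfl

theorem isExitTime_insert_exit_iff (hb : b ∉ T) (hM : IsExitTime σ T b M) (hx : x ∉ T)
    (hxb : x ≠ b) : IsExitTime σ (insert ((σ ^ M) b) T) x n ↔ IsExitTime σ T x n := by
  have hne {m : ℕ} (hm : IsExitTime σ T x m) : (σ ^ m) x ≠ (σ ^ M) b :=
    fun heq ↦ hxb (hm.eq_of_pow_apply_eq hM hx hb heq)
  constructor <;> intro h
  · obtain ⟨m, hmn, hm⟩ :=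
      exists_isExitTime_le h.pos fun hT ↦ h.pow_apply_notMem (Set.mem_insert_of_mem _ hT)
    have hnm : n ≤ m := h.2 ⟨hm.pos, not_or.2 ⟨hne hm, hm.pow_apply_notMem⟩⟩
    rwa [le_antisymm hnm hmn]
  · exact ⟨⟨h.pos, not_or.2 ⟨hne h, h.pow_apply_notMem⟩⟩,
      fun i ⟨hi, hiT⟩ ↦ h.2 ⟨hi, fun hT ↦ hiT (Or.inr hT)⟩⟩

theorem mem_tilde_insert_exit_iff (hb : b ∉ T) (hM : IsExitTime σ T b M)
    (hx : x ∉ insert ((σ ^ M) b) T) (hxb : x ≠ b) :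
    x ∈ tilde σ (insert ((σ ^ M) b) T) ↔ x ∈ tilde σ T := by
  have hxT : x ∉ T := fun hT ↦ hx (Or.inr hT)
  simp only [mem_tilde_iff, hx, hxT, isExitTime_insert_exit_iff hb hM hxT hxb]

theorem notMem_tilde_insert_exit (hM : IsExitTime σ T b M) (heven : Even M)
    (hc : (σ ^ M) b ∉ tilde σ T) (hb : b ∉ insert ((σ ^ M) b) T) :
    b ∉ tilde σ (insert ((σ ^ M) b) T) := by
  -- An even exit time `n` of `b` would make `n - M` an even `T`-exit time of `σ ^ M b`.
  intro hmem
  obtain ⟨n, hneven, hn⟩ := exists_even_isExitTime hmem hb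
  have hMn : M < n := by
    by_contra! hle
    exact hn.pow_apply_notMem (pow_apply_mem_insert_exit hM ⟨hn.pos, hle⟩)
  refine hc (IsExitTime.mem_tilde ⟨⟨Nat.sub_pos_of_lt hMn, ?_⟩, ?_⟩ (hneven.tsub heven))
  · rw [← Equiv.Perm.mul_apply, ← pow_add, Nat.sub_add_cancel hMn.le]
    exact fun hT ↦ hn.pow_apply_notMem (Or.inr hT)
  · rintro i ⟨hi, hiT⟩
    by_contra! hlt
    rw [← Equiv.Perm.mul_apply, ← pow_add] at hiT
    rcases hn.pow_apply_mem (show 0 < i + M by omega) (by omega) with heq | hT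
    · exact hn.pow_apply_ne hb hi (by omega) (pow_add_apply_eq_pow_apply.1 heq)
    · exact hiT hT

theorem mem_Tscr_and_pow_apply_ne_of_mem_Tscr_insert_exit (hM : IsExitTime σ T b M) (heven : Even M)
    (hc : (σ ^ M) b ∉ tilde σ T) (hb : b ∉ insert ((σ ^ M) b) T)
    (hx : x ∈ Tscr σ (insert ((σ ^ M) b) T)) (hxb : x ≠ b) :
    x ∈ Tscr σ T ∧ ∀ i ∈ Set.Ioc 0 M, (σ ^ i) b ≠ x := by
  have hbT : b ∉ T := fun hT ↦ hb (Or.inr hT)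
  rcases hx with hx | ⟨y, ⟨hy, hyT⟩, rfl⟩
  · have hxT : x ∉ insert ((σ ^ M) b) T := fun hT ↦ hx (Or.inl hT)
    exact ⟨Or.inl fun h ↦ hx ((mem_tilde_insert_exit_iff hbT hM hxT hxb).2 h),
      fun i hi heq ↦ hxT (heq ▸ pow_apply_mem_insert_exit hM hi)⟩
  · have hyb : y ≠ b := by
      rintro rfl
      exact notMem_tilde_insert_exit hM heven hc hb hy
    refine ⟨Or.inr ⟨y, ⟨(mem_tilde_insert_exit_iff hbT hM hyT hyb).1 hy,
      fun hT ↦ hyT (Or.inr hT)⟩, rfl⟩, fun i ⟨hi, hiM⟩ heq ↦ ?_⟩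
    obtain ⟨j, rfl⟩ := Nat.exists_eq_add_of_le' hi
    rw [pow_succ', Equiv.Perm.mul_apply, EmbeddingLike.apply_eq_iff_eq] at heq
    subst heq
    rcases j.eq_zero_or_pos with rfl | hj
    · exact hyb rfl
    · exact hyT (Or.inr (hM.pow_apply_mem hj hiM))

end InsertExit

section PointedCones

variable {R E : Type*} [Ring R] [AddCommGroup E] [Module R E] {v w x : E}

theorem mem_of_smodEq_lineal [LinearOrder R] [IsOrderedRing R] {C : PointedCone R E} (hw : w ∈ C)
    (h : v ≡ w [SMOD C.lineal]) : v ∈ C := by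
  simpa using C.add_mem (SModEq.sub_mem.1 h).1 hw

theorem mem_of_mem_hull_of_nonneg [PartialOrder R] [IsOrderedRing R] {C : PointedCone R E}
    {S : Set E} (f : Module.Dual R E) (hw : w ∈ C) (hS : ∀ v ∈ S, v - f v • w ∈ C)
    (hx : x ∈ PointedCone.hull R S) (hfx : 0 ≤ f x) : x ∈ C := by
  have hle : PointedCone.hull R S ≤ C.comap (LinearMap.id - f.smulRight w) :=
    Submodule.span_le.2 fun v hv ↦ by simpa using hS v hv
  have hproj : x - f x • w ∈ C := by simpa using hle hx
  simpa using C.add_mem hproj (C.smul_mem hfx hw)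

end PointedCones

theorem coe_hull_eq_cone {V : Type*} [AddCommMonoid V] [Module ℚ V] (S : Set V) :
    (PointedCone.hull ℚ S : Set V) = cone S := by
  ext x
  rw [SetLike.mem_coe, PointedCone.hull, Submodule.mem_span_set']
  constructor
  · rintro ⟨n, c, v, rfl⟩
    exact ⟨n, fun i ↦ c i, fun i ↦ v i, fun i ↦ (c i).2, fun i ↦ (v i).2, rfl⟩
  · rintro ⟨n, c, v, hc, hv, rfl⟩
    exact ⟨n, fun i ↦ ⟨c i, hc i⟩, fun i ↦ ⟨v i, hv i⟩, rfl⟩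

section Cone

variable {B : Type*} [DecidableEq B] {σ : Equiv.Perm B} {p : ℕ} {T : Set B} {b x y τ : B} {M n : ℕ}

/-- The cone `𝒟_T` as a bundled `PointedCone`, which gives access to its lineality space. -/
def DCone (σ : Equiv.Perm B) (p : ℕ) (T : Set B) : PointedCone ℚ (B → ℚ) :=
  PointedCone.hull ℚ (Dgen σ p T)

theorem coe_DCone (σ : Equiv.Perm B) (p : ℕ) (T : Set B) : (DCone σ p T : Set (B → ℚ)) = D σ p T :=
  coe_hull_eq_cone _

theorem hvec_mem_DCone (hx : x ∉ T) (hy : y ∈ Tscr σ T) (hxy : sameOrbit σ x y) :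
    hvec σ p x y ∈ DCone σ p T :=
  PointedCone.subset_hull (Or.inl ⟨x, y, hx, hy, hxy, rfl⟩)

theorem bsimple_mem_lineal (hτ : τ ∈ T) : bsimple σ p τ ∈ (DCone σ p T).lineal :=
  ⟨PointedCone.subset_hull (Or.inr ⟨τ, hτ, Or.inl rfl⟩),
    PointedCone.subset_hull (Or.inr ⟨τ, hτ, Or.inr rfl⟩)⟩

theorem e_apply_smodEq (hτ : σ τ ∈ T) :
    e (σ τ) ≡ (-p : ℚ) • e τ [SMOD (DCone σ p T).lineal] := by
  rw [SModEq.sub_mem]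
  convert bsimple_mem_lineal (p := p) hτ using 1
  simp [bsimple]

theorem e_pow_apply_smodEq (hn : ∀ i ∈ Set.Ioc 0 n, (σ ^ i) x ∈ T) :
    e ((σ ^ n) x) ≡ (-p : ℚ) ^ n • e x [SMOD (DCone σ p T).lineal] := by
  induction n with
  | zero => simp
  | succ n ih =>
    have hmem : σ ((σ ^ n) x) ∈ T := by
      simpa only [pow_succ', Equiv.Perm.mul_apply] using hn (n + 1) ⟨n.succ_pos, le_rfl⟩
    rw [pow_succ', Equiv.Perm.mul_apply, pow_succ', mul_smul]
    exact (e_apply_smodEq hmem).trans ((ih fun i hi ↦ hn i ⟨hi.1, hi.2.trans n.le_succ⟩).smul _)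

theorem bsimple_exit_smodEq (hM : IsExitTime σ T b M) :
    bsimple σ p ((σ ^ M) b) ≡ e ((σ ^ M) b) - (-p : ℚ) ^ M • e b [SMOD (DCone σ p T).lineal] := by
  obtain ⟨m, rfl⟩ := Nat.exists_eq_add_of_le' hM.pos
  have hrun : e ((σ ^ m) b) ≡ (-p : ℚ) ^ m • e b [SMOD (DCone σ p T).lineal] :=
    e_pow_apply_smodEq fun i hi ↦ hM.pow_apply_mem hi.1 (Nat.lt_succ_of_le hi.2)
  rw [bsimple, inv_apply_pow_succ_apply, pow_succ' (-p : ℚ), mul_smul, neg_smul, sub_neg_eq_add]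
  exact SModEq.rfl.add (hrun.smul _)

theorem neg_e_mem_DCone (hb : b ∈ tilde σ T) (hbT : b ∉ T) : -e b ∈ DCone σ p T := by
  have hmem : hvec σ p b (σ b) ∈ DCone σ p T :=
    hvec_mem_DCone hbT (Or.inr ⟨b, ⟨hb, hbT⟩, rfl⟩) ⟨1, by rw [pow_one]⟩
  set s := steps σ (σ b) b with hs
  have hpos : (0 : ℚ) < 1 + p ^ (s + 1) := by positivity
  have hmod : hvec σ p b (σ b) ≡ (1 + p ^ (s + 1) : ℚ) • -e b [SMOD (DCone σ p T).lineal] := by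
    have hstep := (e_apply_smodEq (p := p) (apply_mem_of_mem_tilde hb hbT)).smul ((p : ℚ) ^ s)
    rw [hvec, ← hs]
    convert (SModEq.refl (-e b)).add hstep using 1
    module
  exact (PointedCone.smul_mem_iff _ hpos).1 (mem_of_smodEq_lineal hmem hmod.symm)

theorem bsimple_exit_mem_DCone (hp : p ≠ 0) (hM : IsExitTime σ T b M) (heven : Even M)
    (hbT : b ∉ T) (hc : (σ ^ M) b ∉ tilde σ T) : bsimple σ p ((σ ^ M) b) ∈ DCone σ p T := by
  have hp' : (1 : ℚ) ≤ p := mod_cast Nat.one_le_iff_ne_zero.2 hp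
  have : (0 : ℚ) < p := by positivity
  have hb : b ∈ tilde σ T := hM.mem_tilde heven
  have hmem : hvec σ p b ((σ ^ M) b) ∈ DCone σ p T := hvec_mem_DCone hbT (Or.inl hc) ⟨M, rfl⟩
  set s := steps σ ((σ ^ M) b) b with hs
  have hcoeff : 0 ≤ (p : ℚ) ^ M - ((p : ℚ) ^ s)⁻¹ :=
    sub_nonneg.2 ((inv_le_one_of_one_le₀ (one_le_pow₀ hp')).trans (one_le_pow₀ hp'))
  refine mem_of_smodEq_lineal (add_mem
    (PointedCone.smul_mem _ (by positivity : 0 ≤ ((p : ℚ) ^ s)⁻¹) hmem)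
    (PointedCone.smul_mem _ hcoeff (neg_e_mem_DCone hb hbT))) ?_
  convert bsimple_exit_smodEq hM using 1
  rw [heven.neg_pow, hvec, ← hs]
  match_scalars
  all_goals field_simp
  ring

end Cone

section RunFunctional

variable {B : Type*} {σ : Equiv.Perm B} {p : ℕ} {T : Set B} {b τ : B} {M n : ℕ}

/-- The functional `L_{T,b}` for `b ∈ T̃ − T` with exit time `M`, as a linear map and with the signs
`ε_T` made explicit. -/
def runFunctional (σ : Equiv.Perm B) (p : ℕ) (b : B) (M : ℕ) : Module.Dual ℚ (B → ℚ) :=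
  -∑ i ∈ Finset.range M, (-p : ℚ) ^ i • LinearMap.proj ((σ ^ i) b)

theorem runFunctional_apply (κ : B → ℚ) :
    runFunctional σ p b M κ = -∑ i ∈ Finset.range M, (-p : ℚ) ^ i * κ ((σ ^ i) b) := by
  simp [runFunctional]

theorem steps0_eq_of_isExitTime (hM : IsExitTime σ T b M) (hb : b ∉ T) (hn : n < M) :
    steps0 σ b ((σ ^ n) b) = n :=
  have hle : steps0 σ b ((σ ^ n) b) ≤ n := Nat.sInf_le rfl
  hM.injOn hb (hle.trans_lt hn) hn (Nat.sInf_mem (s := {k | (σ ^ k) b = (σ ^ n) b}) ⟨n, rfl⟩)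

theorem epsT_pow_apply (hM : IsExitTime σ T b M) (heven : Even M) (hn : n < M) :
    epsT σ T ((σ ^ n) b) = -(-1) ^ n := by
  have hexit := hM.pow_apply hn
  have htilde : (σ ^ n) b ∈ tilde σ T := by
    rcases n.eq_zero_or_pos with rfl | hpos
    · exact hM.mem_tilde heven
    · exact Or.inl (hM.pow_apply_mem hpos hn)
  have hparity : Even (M - n - 1) ↔ Odd n := by
    have hsum : Even (M - n - 1 + (n + 1)) := by rwa [show M - n - 1 + (n + 1) = M by omega]
    rw [Nat.even_add.1 hsum, Nat.even_add_one, Nat.not_even_iff_odd]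
  rw [epsT, if_neg fun horbit ↦ hexit.pow_apply_notMem (horbit ⟨_, rfl⟩), if_pos htilde,
    hexit.mu_eq]
  rcases Nat.even_or_odd n with h | h
  · have hodd : Odd (M - n - 1) := by
      rwa [← Nat.not_even_iff_odd, hparity, Nat.not_odd_iff_even]
    rw [h.neg_one_pow, hodd.neg_one_pow]
  · rw [h.neg_one_pow, (hparity.2 h).neg_one_pow, neg_neg]

theorem LT_eq_runFunctional (hM : IsExitTime σ T b M) (heven : Even M) (hb : b ∉ T) (κ : B → ℚ) :
    LT σ p T b κ = runFunctional σ p b M κ := by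
  have hpos := hM.pos
  rw [LT, if_pos (hM.mem_tilde heven), hM.mu_eq, Lfun,
    steps0_eq_of_isExitTime hM hb (by omega), Nat.sub_add_cancel hpos, runFunctional_apply,
    ← Finset.sum_neg_distrib]
  refine Finset.sum_congr rfl fun i hi ↦ ?_
  rw [epsT_pow_apply hM heven (Finset.mem_range.1 hi), neg_pow (p : ℚ)]
  ring

variable [DecidableEq B]

theorem runFunctional_e_pow_apply (hM : IsExitTime σ T b M) (hb : b ∉ T) (hn : n < M) :
    runFunctional σ p b M (e ((σ ^ n) b)) = -(-p) ^ n := by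
  rw [runFunctional_apply, Finset.sum_eq_single_of_mem n (Finset.mem_range.2 hn)]
  · simp [e]
  · intro i hi hin
    have hne : (σ ^ i) b ≠ (σ ^ n) b := fun h ↦ hin (hM.injOn hb (Finset.mem_range.1 hi) hn h)
    rw [e, if_neg hne, mul_zero]

theorem runFunctional_e_of_ne (hτ : ∀ i < M, (σ ^ i) b ≠ τ) : runFunctional σ p b M (e τ) = 0 := by
  rw [runFunctional_apply, neg_eq_zero]
  refine Finset.sum_eq_zero fun i hi ↦ ?_
  rw [e, if_neg (hτ i (Finset.mem_range.1 hi)), mul_zero]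

theorem runFunctional_bsimple (hM : IsExitTime σ T b M) (hb : b ∉ T) (hτ : τ ∈ T) :
    runFunctional σ p b M (bsimple σ p τ) = 0 := by
  rw [bsimple, map_add, map_smul]
  by_cases hrun : ∃ i < M, (σ ^ i) b = τ
  · obtain ⟨_ | i, hi, rfl⟩ := hrun
    · exact absurd hτ hb
    · rw [inv_apply_pow_succ_apply, runFunctional_e_pow_apply hM hb hi,
        runFunctional_e_pow_apply hM hb (by omega), smul_eq_mul]
      ring
  · push Not at hrun
    have hpred : ∀ i < M, (σ ^ i) b ≠ σ⁻¹ τ := by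
      intro i hi heq
      have hsucc : (σ ^ (i + 1)) b = τ := by
        rw [pow_succ', Equiv.Perm.mul_apply, heq, Equiv.Perm.inv_def, Equiv.apply_symm_apply]
      rcases (Nat.succ_le_of_lt hi).lt_or_eq with hlt | rfl
      · exact hrun _ hlt hsucc
      · exact hM.pow_apply_notMem (hsucc ▸ hτ)
    rw [runFunctional_e_of_ne hrun, runFunctional_e_of_ne hpred, smul_zero, add_zero]

theorem runFunctional_bsimple_exit (hM : IsExitTime σ T b M) (hb : b ∉ insert ((σ ^ M) b) T) :
    runFunctional σ p b M (bsimple σ p ((σ ^ M) b)) = (-p) ^ M := by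
  have hbT : b ∉ T := fun hT ↦ hb (Or.inr hT)
  have hexit : ∀ i < M, (σ ^ i) b ≠ (σ ^ M) b := by
    rintro (_ | i) hi heq
    · exact hb (Or.inl heq)
    · exact hM.pow_apply_notMem (heq ▸ hM.pow_apply_mem i.succ_pos hi)
  obtain ⟨m, rfl⟩ := Nat.exists_eq_add_of_le' hM.pos
  rw [bsimple, map_add, map_smul, runFunctional_e_of_ne hexit, inv_apply_pow_succ_apply,
    runFunctional_e_pow_apply hM hbT m.lt_succ_self, smul_eq_mul]
  ring

end RunFunctional

section Exchange

variable {B : Type*} [DecidableEq B] {σ : Equiv.Perm B} {p : ℕ} {T : Set B} {b x y τ : B} {M : ℕ}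

/-- The projection along `b_c`, where `c = σ^M b`, onto the kernel of `runFunctional σ p b M`.
Modulo the span of the `b_τ` with `τ ∈ T`, it replaces `e_b` by `p^{-M} e_c` if `M` is even. -/
def exchange (σ : Equiv.Perm B) (p : ℕ) (b : B) (M : ℕ) : (B → ℚ) →ₗ[ℚ] (B → ℚ) :=
  LinearMap.id -
    (((-p : ℚ) ^ M)⁻¹ • runFunctional σ p b M).smulRight (bsimple σ p ((σ ^ M) b))

theorem exchange_apply (v : B → ℚ) :
    exchange σ p b M v =
      v - (((-p : ℚ) ^ M)⁻¹ • runFunctional σ p b M) v • bsimple σ p ((σ ^ M) b) := rfl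

/-- The number of steps by which `exchange σ p b M` moves the index `τ` of a basis vector `e_τ`. -/
def exitShift (b : B) (M : ℕ) (τ : B) : ℕ := if τ = b then M else 0

theorem exitShift_self (b : B) (M : ℕ) : exitShift b M b = M := if_pos rfl

theorem exitShift_of_ne (hτ : τ ≠ b) : exitShift b M τ = 0 := if_neg hτ

theorem exchange_e_smodEq (hp : p ≠ 0) (hM : IsExitTime σ T b M) (heven : Even M) (hb : b ∉ T)
    (hτ : ∀ i ∈ Set.Ioc 0 M, (σ ^ i) b ≠ τ) :
    exchange σ p b M (e τ) ≡
      ((p : ℚ) ^ exitShift b M τ)⁻¹ • e ((σ ^ exitShift b M τ) τ) [SMOD (DCone σ p T).lineal] := by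
  have hp' : (p : ℚ) ≠ 0 := mod_cast hp
  by_cases hτb : τ = b
  · subst hτb
    have hfun : runFunctional σ p τ M (e τ) = -1 := by
      simpa using runFunctional_e_pow_apply (p := p) hM hb hM.pos
    rw [exitShift_self, exchange_apply, LinearMap.smul_apply, hfun, smul_eq_mul, mul_neg_one,
      neg_smul, sub_neg_eq_add, heven.neg_pow]
    convert (SModEq.refl (e τ)).add ((bsimple_exit_smodEq (p := p) hM).smul ((p : ℚ) ^ M)⁻¹) using 1
    rw [heven.neg_pow, smul_sub, inv_smul_smul₀ (pow_ne_zero _ hp'), add_sub_cancel]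
  · have hfun : runFunctional σ p b M (e τ) = 0 := by
      refine runFunctional_e_of_ne fun i hi ↦ ?_
      rcases i.eq_zero_or_pos with rfl | hpos
      · exact Ne.symm hτb
      · exact hτ i ⟨hpos, hi.le⟩
    rw [exitShift_of_ne hτb, exchange_apply, LinearMap.smul_apply, hfun]
    simp

theorem steps_exitShift_add (hper : b ∈ Function.periodicPts σ)
    (hx : ∀ i ∈ Set.Ioc 0 M, (σ ^ i) b ≠ x) (hy : ∀ i ∈ Set.Ioc 0 M, (σ ^ i) b ≠ y)
    (hxy : sameOrbit σ x y) :
    steps σ ((σ ^ exitShift b M y) y) ((σ ^ exitShift b M x) x) + exitShift b M y =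
      steps σ y x + exitShift b M x := by
  by_cases hxb : x = b <;> by_cases hyb : y = b
  · rw [hxb, hyb, exitShift_self, steps_pow_apply_pow_apply]
  · subst hxb
    rw [exitShift_self, exitShift_of_ne hyb, pow_zero, Equiv.Perm.one_apply, add_zero]
    refine steps_pow_apply_right (exists_pos_pow_apply_eq hper hxy) fun i hi ↦ ?_
    rcases i.eq_zero_or_pos with rfl | hpos
    · exact Ne.symm hyb
    · exact hy i ⟨hpos, hi.le⟩
  · subst hyb
    rw [exitShift_self, exitShift_of_ne hxb, pow_zero, Equiv.Perm.one_apply, add_zero]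
    exact steps_pow_apply_left
      (exists_pos_pow_apply_eq (mem_periodicPts_of_sameOrbit hper hxy) hxy) hx
  · simp [exitShift_of_ne hxb, exitShift_of_ne hyb]

theorem sameOrbit_exitShift (hper : b ∈ Function.periodicPts σ) (hxy : sameOrbit σ x y) :
    sameOrbit σ ((σ ^ exitShift b M x) x) ((σ ^ exitShift b M y) y) := by
  refine sameOrbit.trans ?_ (hxy.trans ⟨_, rfl⟩)
  by_cases hxb : x = b
  · subst hxb
    exact sameOrbit.symm hper ⟨_, rfl⟩
  · exact ⟨0, by rw [exitShift_of_ne hxb]; rfl⟩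

theorem exchange_hvec_smodEq (hp : p ≠ 0) (hper : b ∈ Function.periodicPts σ)
    (hM : IsExitTime σ T b M) (heven : Even M) (hb : b ∉ T)
    (hx : ∀ i ∈ Set.Ioc 0 M, (σ ^ i) b ≠ x) (hy : ∀ i ∈ Set.Ioc 0 M, (σ ^ i) b ≠ y)
    (hxy : sameOrbit σ x y) :
    exchange σ p b M (hvec σ p x y) ≡ ((p : ℚ) ^ exitShift b M x)⁻¹ •
      hvec σ p ((σ ^ exitShift b M x) x) ((σ ^ exitShift b M y) y)
      [SMOD (DCone σ p T).lineal] := by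
  have : (p : ℚ) ≠ 0 := mod_cast hp
  have hsteps := congrArg ((p : ℚ) ^ ·) (steps_exitShift_add hper hx hy hxy)
  simp only [pow_add] at hsteps
  rw [hvec, map_add, map_neg, map_smul]
  convert (exchange_e_smodEq hp hM heven hb hx).neg.add
    ((exchange_e_smodEq hp hM heven hb hy).smul ((p : ℚ) ^ steps σ y x)) using 1
  rw [hvec]
  match_scalars
  · field_simp
  · field_simp
    linear_combination hsteps

theorem exchange_bsimple_mem_lineal (hp : p ≠ 0) (hM : IsExitTime σ T b M)
    (hb : b ∉ insert ((σ ^ M) b) T) (hτ : τ ∈ insert ((σ ^ M) b) T) :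
    exchange σ p b M (bsimple σ p τ) ∈ (DCone σ p T).lineal := by
  rw [exchange_apply, LinearMap.smul_apply]
  rcases hτ with rfl | hτ
  · have hp' : (-p : ℚ) ^ M ≠ 0 := pow_ne_zero _ (neg_ne_zero.2 (mod_cast hp))
    rw [runFunctional_bsimple_exit hM hb, smul_eq_mul, inv_mul_cancel₀ hp', one_smul, sub_self]
    exact zero_mem _
  · rw [runFunctional_bsimple hM (fun hT ↦ hb (Or.inr hT)) hτ, smul_zero, zero_smul, sub_zero]
    exact bsimple_mem_lineal hτ

theorem exchange_mem_DCone (hp : p ≠ 0) (hper : b ∈ Function.periodicPts σ)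
    (hM : IsExitTime σ T b M) (heven : Even M) (hc : (σ ^ M) b ∉ tilde σ T)
    (hb : b ∉ insert ((σ ^ M) b) T) {v : B → ℚ} (hv : v ∈ Dgen σ p (insert ((σ ^ M) b) T)) :
    exchange σ p b M v ∈ DCone σ p T := by
  have hbT : b ∉ T := fun hT ↦ hb (Or.inr hT)
  rcases hv with ⟨x, y, hx, hy, hxy, rfl⟩ | ⟨τ, hτ, rfl | rfl⟩
  · have hxrun : ∀ i ∈ Set.Ioc 0 M, (σ ^ i) b ≠ x :=
      fun i hi heq ↦ hx (heq ▸ pow_apply_mem_insert_exit hM hi)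
    have hxshift : (σ ^ exitShift b M x) x ∉ T := by
      by_cases hxb : x = b
      · rw [hxb, exitShift_self]
        exact hM.pow_apply_notMem
      · rw [exitShift_of_ne hxb]
        exact fun hT ↦ hx (Or.inr hT)
    obtain ⟨hyshift, hyrun⟩ : (σ ^ exitShift b M y) y ∈ Tscr σ T ∧
        ∀ i ∈ Set.Ioc 0 M, (σ ^ i) b ≠ y := by
      by_cases hyb : y = b
      · rw [hyb, exitShift_self]
        refine ⟨Or.inl hc, fun i hi heq ↦ hb ?_⟩
        simpa only [heq] using pow_apply_mem_insert_exit hM hi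
      · rw [exitShift_of_ne hyb]
        exact mem_Tscr_and_pow_apply_ne_of_mem_Tscr_insert_exit hM heven hc hb hy hyb
    exact mem_of_smodEq_lineal (PointedCone.smul_mem _ (by positivity)
      (hvec_mem_DCone hxshift hyshift (sameOrbit_exitShift hper hxy)))
      (exchange_hvec_smodEq hp hper hM heven hbT hxrun hyrun hxy)
  · exact (exchange_bsimple_mem_lineal hp hM hb hτ).1
  · rw [map_neg]
    exact (exchange_bsimple_mem_lineal hp hM hb hτ).2

end Exchange

end GO

theorem statement8_general {B : Type*} [DecidableEq B] (σ : Equiv.Perm B) (p : ℕ) (hp : p ≠ 0)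
    (T : Set B) (β₁ : B) (hper : β₁ ∈ Function.periodicPts σ)
    (h₁ : β₁ ∈ GO.tilde σ T) (h₂ : β₁ ∉ T)
    (h₃ : (σ ^ GO.mu σ T β₁) β₁ ∉ GO.tilde σ T) :
    GO.D σ p (T ∪ {(σ ^ GO.mu σ T β₁) β₁}) ∩ {κ : B → ℚ | 0 ≤ GO.LT σ p T β₁ κ}
      ⊆ GO.D σ p T := by
  obtain ⟨M, heven, hM⟩ := GO.exists_even_isExitTime h₁ h₂
  rw [hM.mu_eq] at h₃ ⊢
  rw [Set.union_singleton, ← GO.coe_DCone, ← GO.coe_DCone]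
  have hb : β₁ ∉ insert ((σ ^ M) β₁) T := not_or.2 ⟨fun heq ↦ h₃ (heq ▸ h₁), h₂⟩
  rintro κ ⟨hκ, hL : 0 ≤ GO.LT σ p T β₁ κ⟩
  rw [GO.LT_eq_runFunctional hM heven h₂] at hL
  refine GO.mem_of_mem_hull_of_nonneg (((-p : ℚ) ^ M)⁻¹ • GO.runFunctional σ p β₁ M)
    (GO.bsimple_exit_mem_DCone hp hM heven h₂ h₃)
    (fun v hv ↦ GO.exchange_mem_DCone hp hper hM heven h₃ hb hv) hκ ?_
  exact mul_nonneg (inv_nonneg.2 (heven.pow_nonneg _)) hL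

/-- let `β₁ ∈ T̃_𝔭 − T_𝔭` with `β := σ^{μ_{β₁}}β₁ ∈ 𝔹_𝔭 − T̃_𝔭`, and
`T″ = T ∪ {β}`.  Then `𝒟_{T″} ∩ {κ : L_{T,β₁}(κ) ≥ 0} ⊆ 𝒟_T`. -/
theorem statement8 {B : Type*} [Fintype B] [DecidableEq B] [Nonempty B]
    (σ : Equiv.Perm B) (p : ℕ) (hp : p.Prime) (T : Set B) (β₁ : B)
    (h₁ : β₁ ∈ GO.tilde σ T) (h₂ : β₁ ∉ T)
    (h₃ : (σ ^ GO.mu σ T β₁) β₁ ∉ GO.tilde σ T) :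
    GO.D σ p (T ∪ {(σ ^ GO.mu σ T β₁) β₁}) ∩ {κ : B → ℚ | 0 ≤ GO.LT σ p T β₁ κ}
      ⊆ GO.D σ p T := by
  exact statement8_general σ p hp.ne_zero T β₁ (σ.injective.mem_periodicPts β₁) h₁ h₂ h₃
end
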